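/- Suppose a and b are radical ideals, M is a faithful finitely generated R-module, and a ∼_{(0;M)} b. Then a ∼_{(0;R)} b, i.e., 0 :_R a = b and 0 :_R b = a. -/

import Mathlib

/-- The colon submodule `N :_M a = {m ∈ M | a m ⊆ N}`. -/
def Submodule.colonBy {R M : Type*} [CommRing R] [AddCommGroup M] [Module R M]
    (N : Submodule R M) (a : Ideal R) : Submodule R M :=
  ⨅ r ∈ a, N.comap (LinearMap.lsmul R M r)

/-! If `N :_M a = b M`, then an element `x` lies in `(N :_R M) :_R a` if and only if `x M ⊆ b M`,
that is, if and only if `x` annihilates `M / b M`. Since `Supp (M / b M) = Supp M ∩ V(b)` for finite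
`M`, such an `x` lies in every prime containing both `b` and `Ann M`. When `b` is radical and
contains `Ann M`, this forces `x ∈ b`. -/

section

variable {R M : Type*} [CommRing R] [AddCommGroup M] [Module R M]

theorem mem_colonBy {N : Submodule R M} {a : Ideal R} {m : M} :
    m ∈ N.colonBy a ↔ ∀ r ∈ a, r • m ∈ N := by
  simp [Submodule.colonBy]

theorem colonBy_colon_univ (N : Submodule R M) (a : Ideal R) :
    (N.colonBy a).colon Set.univ = (N.colon Set.univ).colonBy a := by
  ext x
  simp only [Submodule.mem_colon, mem_colonBy, Set.mem_univ, forall_const, smul_assoc]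
  exact forall_comm.trans (forall_congr' fun _ => forall_comm)

variable [Module.Finite R M]

theorem radical_smul_top_colon_univ (b : Ideal R) :
    ((b • (⊤ : Submodule R M)).colon Set.univ).radical =
      (Module.annihilator R M ⊔ b).radical := by
  rw [← Submodule.annihilator_quotient, ← PrimeSpectrum.zeroLocus_eq_iff,
    ← Module.support_eq_zeroLocus, Module.support_quotient, Module.support_eq_zeroLocus,
    PrimeSpectrum.zeroLocus_sup]

theorem smul_top_colon_univ_of_isRadical {b : Ideal R} (hb : b.IsRadical)
    (hann : Module.annihilator R M ≤ b) : (b • (⊤ : Submodule R M)).colon Set.univ = b := by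
  apply le_antisymm
  · calc
      (b • (⊤ : Submodule R M)).colon Set.univ
        ≤ ((b • (⊤ : Submodule R M)).colon Set.univ).radical := Ideal.le_radical
      _ = (Module.annihilator R M ⊔ b).radical := radical_smul_top_colon_univ b
      _ = b := by rw [sup_eq_right.mpr hann, hb.radical]
  · exact fun x hx => Submodule.mem_colon.mpr fun m _ =>
      Submodule.smul_mem_smul hx Submodule.mem_top

theorem colon_univ_colonBy_eq_of_colonBy_eq_smul_top {N : Submodule R M} {a b : Ideal R}
    (hb : b.IsRadical) (hann : Module.annihilator R M ≤ b) (hab : N.colonBy a = b • ⊤) :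
    (N.colon Set.univ).colonBy a = b := by
  rw [← colonBy_colon_univ, hab, smul_top_colon_univ_of_isRadical hb hann]

theorem linked_ring_of_linked_faithful_general {N : Submodule R M} {a b : Ideal R}
    (ha : a.IsRadical) (hb : b.IsRadical)
    (hanna : Module.annihilator R M ≤ a) (hannb : Module.annihilator R M ≤ b)
    (hab : N.colonBy a = b • ⊤ ∧ N.colonBy b = a • ⊤) :
    (N.colon Set.univ).colonBy a = b ∧ (N.colon Set.univ).colonBy b = a :=
  ⟨colon_univ_colonBy_eq_of_colonBy_eq_smul_top hb hannb hab.1,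
    colon_univ_colonBy_eq_of_colonBy_eq_smul_top ha hanna hab.2⟩

end

/-- If `a` and `b` are radical ideals, `M` is faithful and `a ∼_{(0;M)} b`,
then `a ∼_{(0;R)} b`. -/
theorem linked_ring_of_linked_faithful {R M : Type*} [CommRing R] [IsNoetherianRing R]
    [AddCommGroup M] [Module R M] [Module.Finite R M]
    (a b : Ideal R) (hrada : a.IsRadical) (hradb : b.IsRadical)
    (ha : a ≠ ⊥) (ha' : a ≠ ⊤) (hb : b ≠ ⊥) (hb' : b ≠ ⊤)
    (hfaithful : Module.annihilator R M = ⊥)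
    (hab : (⊥ : Submodule R M).colonBy a = b • ⊤ ∧ (⊥ : Submodule R M).colonBy b = a • ⊤)
    (haM : a • (⊤ : Submodule R M) ≠ ⊤) (hbM : b • (⊤ : Submodule R M) ≠ ⊤) :
    (⊥ : Ideal R).colonBy a = b ∧ (⊥ : Ideal R).colonBy b = a := by
  simpa only [Submodule.bot_colon', Submodule.span_univ, Submodule.annihilator_top, hfaithful] using
    linked_ring_of_linked_faithful_general hrada hradb
      (hfaithful.trans_le bot_le) (hfaithful.trans_le bot_le) hab
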